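/- Fix an admissible test family and equip Conf^lf_∞(ℂ) with the sum metric d_sum. Then the metric space (Conf^lf_∞(ℂ), d_sum) is path-connected. -/

import Mathlib

open scoped Topology
open Filter

noncomputable section

/-- A subset of `ℂ` is locally finite if it meets every compact set in a finite set. -/
def LocFin (A : Set ℂ) : Prop := ∀ K : Set ℂ, IsCompact K → (A ∩ K).Finite

/-- Membership in `C^lf_∞(ℂ)`: countably infinite, locally finite subsets of `ℂ`. -/
def IsClf (A : Set ℂ) : Prop := A.Countable ∧ A.Infinite ∧ LocFin A

/-- An admissible test family `(φ_j)_{j≥1}` (indexed here by `j : ℕ`, with `φ j`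
representing `φ_{j+1}`): for every `m ≥ 1` the subfamily of those `φ_j` supported in the
closed ball `K_m` is dense, for the sup norm, in the continuous compactly supported
functions with support in `K_m`. -/
structure TestFamily where
  φ : ℕ → ℂ → ℝ
  cont : ∀ j, Continuous (φ j)
  cpt : ∀ j, HasCompactSupport (φ j)
  dense : ∀ m : ℕ, 1 ≤ m → ∀ ψ : ℂ → ℝ, Continuous ψ → HasCompactSupport ψ →
      tsupport ψ ⊆ Metric.closedBall (0 : ℂ) (m : ℝ) →
      ∀ ε : ℝ, 0 < ε → ∃ j, tsupport (φ j) ⊆ Metric.closedBall (0 : ℂ) (m : ℝ) ∧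
        ∀ z, |φ j z - ψ z| ≤ ε

/-- `S_j(A) = ∑_{a∈A} φ_j(a)` (a sum with finitely many nonzero terms). -/
def Ssum (T : TestFamily) (j : ℕ) (A : Set ℂ) : ℝ := ∑ᶠ a ∈ A, T.φ j a

/-- The vague metric `d_V(A,B) = ∑_j 2^{-j} |S_j(A)-S_j(B)| / (1+|S_j(A)-S_j(B)|)`. -/
def dV (T : TestFamily) (A B : Set ℂ) : ℝ :=
  ∑' j : ℕ, (1 / 2 : ℝ) ^ (j + 1) *
    (|Ssum T j A - Ssum T j B| / (1 + |Ssum T j A - Ssum T j B|))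

/-- Ordered locally finite infinite configurations: injective sequences in `ℂ` with only
finitely many terms in each bounded disk. -/
def IsConf (x : ℕ → ℂ) : Prop :=
  Function.Injective x ∧ ∀ R : ℝ, 0 < R → {j : ℕ | ‖x j‖ ≤ R}.Finite

/-- The product metric `d_prod(x,y) = ∑_j 2^{-j} min(|x_j - y_j|, 1)`. -/
def dProd (x y : ℕ → ℂ) : ℝ :=
  ∑' j : ℕ, (1 / 2 : ℝ) ^ (j + 1) * min ‖x j - y j‖ 1

/-- The projection `P` to the underlying unordered configuration. -/
def Pmap (x : ℕ → ℂ) : Set ℂ := Set.range x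

/-- The sum metric `d_sum(x,y) = d_prod(x,y) + d_V(P(x),P(y))`. -/
def dSum (T : TestFamily) (x y : ℕ → ℂ) : ℝ :=
  dProd x y + dV T (Pmap x) (Pmap y)

/-- The space `Conf^lf_∞(ℂ)`; the test family is carried as a (phantom) parameter so that
the metric topology of `d_sum` can be installed as a typeclass instance. -/
structure ConfSp (T : TestFamily) where
  seq : ℕ → ℂ
  prop : IsConf seq

/-- The metric topology of `d_sum`: the topology generated by its open balls. -/
instance (T : TestFamily) : TopologicalSpace (ConfSp T) :=
  TopologicalSpace.generateFrom
    {s : Set (ConfSp T) | ∃ (x : ConfSp T) (ε : ℝ), 0 < ε ∧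
      s = {y : ConfSp T | dSum T x.seq y.seq < ε}}

/-- The basepoint `Ñ = (1, 2, 3, …)`. -/
def Ntilde (T : TestFamily) : ConfSp T where
  seq := fun j => (j : ℂ) + 1
  prop := by
    constructor
    · intro a b hab
      have h : ((a : ℂ) + 1) = ((b : ℂ) + 1) := hab
      have h2 : (a : ℂ) = (b : ℂ) := by linear_combination h
      exact_mod_cast h2
    · intro R hR
      apply Set.Finite.subset (Set.finite_Iic (Nat.floor R))
      intro j hj
      simp only [Set.mem_setOf_eq] at hj
      have habs : ‖(j : ℂ) + 1‖ = (j : ℝ) + 1 := by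
        rw [show ((j : ℂ) + 1) = (((j : ℝ) + 1 : ℝ) : ℂ) by push_cast; ring]
        rw [Complex.norm_real, Real.norm_of_nonneg (by positivity)]
      rw [habs] at hj
      have : (j : ℝ) ≤ R := by linarith
      exact Set.mem_Iic.mpr (Nat.le_floor this)

/-- A smooth path between two points of the plane which does not come closer to `0`
than its endpoints. -/
lemma exists_base_path (x y : ℂ) : ∃ b : ℝ → ℂ, ContDiff ℝ 1 b ∧ b 0 = x ∧ b 1 = y ∧
    ∀ t ∈ Set.Icc (0 : ℝ) 1, min ‖x‖ ‖y‖ ≤ ‖b t‖ := by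
  by_cases h : x = 0 ∨ y = 0
  · refine ⟨fun t => (1 - (t : ℂ)) * x + (t : ℂ) * y, ?_, by simp, by simp, ?_⟩
    · have h1 : ContDiff ℝ 1 (fun t : ℝ => (t : ℂ)) := Complex.ofRealCLM.contDiff
      fun_prop
    · intro t _
      rcases h with h | h
      · subst h; simp; positivity
      · subst h; simp; positivity
  · push Not at h
    obtain ⟨hx, hy⟩ := h
    refine ⟨fun t => Complex.exp ((1 - (t : ℂ)) * Complex.log x + (t : ℂ) * Complex.log y),
      ?_, by simp [Complex.exp_log hx], by simp [Complex.exp_log hy], ?_⟩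
    · have h1 : ContDiff ℝ 1 (fun t : ℝ => (t : ℂ)) := Complex.ofRealCLM.contDiff
      exact ContDiff.cexp (by fun_prop)
    · intro t ht
      have hx0 : 0 < ‖x‖ := norm_pos_iff.2 hx
      have hy0 : 0 < ‖y‖ := norm_pos_iff.2 hy
      have hm : 0 < min ‖x‖ ‖y‖ := lt_min hx0 hy0
      rw [Complex.norm_exp]
      have hre : ((1 - (t : ℂ)) * Complex.log x + (t : ℂ) * Complex.log y).re
          = (1 - t) * Real.log ‖x‖ + t * Real.log ‖y‖ := by
        simp [Complex.log_re]
      rw [hre, ← Real.log_le_iff_le_exp hm]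
      have h1 : Real.log (min ‖x‖ ‖y‖) ≤ Real.log ‖x‖ := Real.log_le_log hm (min_le_left _ _)
      have h2 : Real.log (min ‖x‖ ‖y‖) ≤ Real.log ‖y‖ := Real.log_le_log hm (min_le_right _ _)
      nlinarith [ht.1, ht.2]

/-- Genericity: one small parameter `c` separates countably many perturbed paths. -/
lemma exists_generic (b : ℕ → ℝ → ℂ) (hb : ∀ k, ContDiff ℝ 1 (b k)) :
    ∃ c : ℂ, ‖c‖ < 1 ∧ ∀ k l, k ≠ l → ∀ t ∈ Set.Ioo (0 : ℝ) 1,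
      b k t + c * (((1 / ((k : ℝ) + 1)) * (t * (1 - t)) : ℝ) : ℂ) ≠
      b l t + c * (((1 / ((l : ℝ) + 1)) * (t * (1 - t)) : ℝ) : ℂ) := by
  let g : ℕ × ℕ → ℝ → ℂ := fun p t =>
    ((1 / ((p.1 : ℝ) + 1) - 1 / ((p.2 : ℝ) + 1))⁻¹ * (t * (1 - t))⁻¹ : ℝ) • (b p.2 t - b p.1 t)
  have hg : ∀ p, ContDiffOn ℝ 1 (g p) (Set.Ioo 0 1) := by
    intro p
    have h1 : ContDiffOn ℝ 1 (fun t : ℝ => (t * (1 - t))⁻¹) (Set.Ioo 0 1) := by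
      apply ContDiffOn.inv
      · fun_prop
      · intro t ht
        exact (mul_pos ht.1 (sub_pos.2 ht.2)).ne'
    have h2 : ContDiff ℝ 1 (fun t => b p.2 t - b p.1 t) := (hb _).sub (hb _)
    exact (contDiffOn_const.mul h1).smul h2.contDiffOn
  have hdim : dimH (⋃ p, g p '' Set.Ioo 0 1) < Module.finrank ℝ ℂ := by
    have : dimH (⋃ p, g p '' Set.Ioo 0 1) ≤ 1 := by
      rw [dimH_iUnion]
      refine iSup_le fun p => ?_
      refine ((hg p).dimH_image_le (convex_Ioo 0 1) subset_rfl).trans ?_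
      exact (dimH_mono (Set.subset_univ _)).trans Real.dimH_univ.le
    refine this.trans_lt ?_
    rw [Complex.finrank_real_complex]
    norm_num
  obtain ⟨c, hc, hc1⟩ := (dense_compl_of_dimH_lt_finrank hdim).exists_mem_open
    Metric.isOpen_ball (⟨0, Metric.mem_ball_self one_pos⟩ : (Metric.ball (0 : ℂ) 1).Nonempty)
  refine ⟨c, by simpa using hc1, fun k l hkl t ht heq => hc ?_⟩
  refine Set.mem_iUnion.2 ⟨(k, l), t, ht, ?_⟩
  have hs : t * (1 - t) ≠ 0 := (mul_pos ht.1 (sub_pos.2 ht.2)).ne'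
  have hd : 1 / ((k : ℝ) + 1) - 1 / ((l : ℝ) + 1) ≠ 0 := by
    intro h
    apply hkl
    have hk : (k : ℝ) + 1 ≠ 0 := by positivity
    have hl : (l : ℝ) + 1 ≠ 0 := by positivity
    have h' : 1 / ((k : ℝ) + 1) = 1 / ((l : ℝ) + 1) := sub_eq_zero.1 h
    have h3 : (k : ℝ) + 1 = (l : ℝ) + 1 := by
      simpa using h'
    exact_mod_cast add_right_cancel h3
  have key : b l t - b k t =
      ((1 / ((k : ℝ) + 1) - 1 / ((l : ℝ) + 1)) * (t * (1 - t)) : ℝ) • c := by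
    rw [Complex.real_smul]
    push_cast at heq ⊢
    linear_combination -heq
  change ((1 / ((k : ℝ) + 1) - 1 / ((l : ℝ) + 1))⁻¹ * (t * (1 - t))⁻¹ : ℝ) •
    (b l t - b k t) = c
  rw [key, smul_smul, ← mul_inv, inv_mul_cancel₀ (mul_ne_zero hd hs), one_smul]

/-- A criterion for the continuity of a map to the configuration space. -/
lemma continuous_of_uniform {X : Type*} [TopologicalSpace X] (T : TestFamily)
    (γ : X → ConfSp T) (hc : ∀ k, Continuous fun t => (γ t).seq k)
    (hf : ∀ R : ℝ, {k : ℕ | ∃ t, ‖(γ t).seq k‖ ≤ R}.Finite) : Continuous γ := by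
  have hS : ∀ j, Continuous fun t => Ssum T j (Pmap (γ t).seq) := by
    intro j
    obtain ⟨R, hR⟩ := (T.cpt j).isCompact.isBounded.subset_closedBall (0 : ℂ)
    have : (fun t => Ssum T j (Pmap (γ t).seq)) =
        fun t => ∑ k ∈ (hf R).toFinset, T.φ j ((γ t).seq k) := by
      funext t
      unfold Ssum Pmap
      rw [finsum_mem_range (γ t).prop.1]
      refine finsum_eq_sum_of_support_subset _ ?_
      intro k hk
      simp only [Set.Finite.coe_toFinset, Set.mem_setOf_eq]
      refine ⟨t, ?_⟩
      simpa using hR (subset_tsupport _ hk)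
    rw [this]
    exact continuous_finset_sum _ fun k _ => (T.cont j).comp (hc k)
  have hsum : Summable fun j : ℕ => (1 / 2 : ℝ) ^ (j + 1) :=
    (summable_nat_add_iff 1).2 summable_geometric_two
  refine continuous_generateFrom_iff.2 ?_
  rintro s ⟨x, ε, hε, rfl⟩
  refine isOpen_lt (f := fun t => dSum T x.seq (γ t).seq) ?_ continuous_const
  unfold dSum dProd dV
  refine Continuous.add ?_ ?_
  · refine continuous_tsum (fun j => ?_) hsum fun j t => ?_
    · have := hc j
      fun_prop
    · rw [Real.norm_of_nonneg (by positivity)]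
      exact mul_le_of_le_one_right (by positivity) (min_le_right _ _)
  · refine continuous_tsum (fun j => ?_) hsum fun j t => ?_
    · have h1 : Continuous fun t => |Ssum T j (Pmap x.seq) - Ssum T j (Pmap (γ t).seq)| :=
        (continuous_const.sub (hS j)).abs
      exact continuous_const.mul (h1.div (continuous_const.add h1) fun t => by positivity)
    · rw [Real.norm_of_nonneg (by positivity)]
      refine mul_le_of_le_one_right (by positivity) ?_
      rw [div_le_one (by positivity)]
      linarith

lemma confSp_joined (T : TestFamily) (x y : ConfSp T) : Joined x y := by
  choose b hb hb0 hb1 hbn using fun k => exists_base_path (x.seq k) (y.seq k)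
  obtain ⟨c, hc, hgen⟩ := exists_generic b hb
  let s : ℕ → ℝ → ℂ := fun k t =>
    b k t + c * (((1 / ((k : ℝ) + 1)) * (t * (1 - t)) : ℝ) : ℂ)
  have hs0 : ∀ k, s k 0 = x.seq k := fun k => by simp [s, hb0]
  have hs1 : ∀ k, s k 1 = y.seq k := fun k => by simp [s, hb1]
  have hsn : ∀ k, ∀ t ∈ Set.Icc (0 : ℝ) 1, min ‖x.seq k‖ ‖y.seq k‖ - 1 ≤ ‖s k t‖ := by
    intro k t ht
    have h1 : 0 ≤ t * (1 - t) := mul_nonneg ht.1 (sub_nonneg.2 ht.2)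
    have h2 : t * (1 - t) ≤ 1 := by nlinarith [ht.1, ht.2]
    have h3 : 1 / ((k : ℝ) + 1) ≤ 1 := by
      rw [div_le_one (by positivity)]
      linarith [(Nat.cast_nonneg k : (0 : ℝ) ≤ k)]
    have h4 : ‖c * (((1 / ((k : ℝ) + 1)) * (t * (1 - t)) : ℝ) : ℂ)‖ ≤ 1 := by
      rw [norm_mul, Complex.norm_real, Real.norm_of_nonneg (by positivity)]
      exact mul_le_one₀ hc.le (by positivity) (mul_le_one₀ h3 h1 h2)
    have h5 := norm_sub_le_norm_add (b k t) (c * (((1 / ((k : ℝ) + 1)) * (t * (1 - t)) : ℝ) : ℂ))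
    have h6 := hbn k t ht
    change _ ≤ ‖b k t + c * (((1 / ((k : ℝ) + 1)) * (t * (1 - t)) : ℝ) : ℂ)‖
    linarith
  have hfin : ∀ R : ℝ, {k : ℕ | ∃ t : unitInterval, ‖s k t‖ ≤ R}.Finite := by
    intro R
    have hpos : 0 < |R| + 1 := by positivity
    refine ((x.prop.2 _ hpos).union (y.prop.2 _ hpos)).subset ?_
    rintro k ⟨t, ht⟩
    have h1 := hsn k t t.2
    have h2 : min ‖x.seq k‖ ‖y.seq k‖ ≤ |R| + 1 := by linarith [le_abs_self R]
    exact min_le_iff.1 h2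
  have hinj : ∀ t : unitInterval, Function.Injective fun k => s k t := by
    intro t k l hkl
    by_contra hne
    rcases eq_or_lt_of_le t.2.1 with h0 | h0
    · simp only [← h0, hs0] at hkl
      exact hne (x.prop.1 hkl)
    rcases eq_or_lt_of_le t.2.2 with h1 | h1
    · simp only [h1, hs1] at hkl
      exact hne (y.prop.1 hkl)
    exact hgen k l hne t ⟨h0, h1⟩ hkl
  let γ : unitInterval → ConfSp T := fun t =>
    ⟨fun k => s k t, hinj t, fun R _ => (hfin R).subset fun k hk => ⟨t, hk⟩⟩
  have hγ : Continuous γ := by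
    refine continuous_of_uniform T γ (fun k => ?_) hfin
    have hbk := (hb k).continuous
    change Continuous fun t : unitInterval =>
      b k t + c * (((1 / ((k : ℝ) + 1)) * ((t : ℝ) * (1 - t)) : ℝ) : ℂ)
    fun_prop
  have hext : ∀ u v : ConfSp T, u.seq = v.seq → u = v := by
    rintro ⟨u, _⟩ ⟨v, _⟩ h
    cases h
    rfl
  refine ⟨⟨⟨γ, hγ⟩, ?_, ?_⟩⟩
  · refine hext _ _ (funext fun k => ?_)
    simpa [γ] using hs0 k
  · refine hext _ _ (funext fun k => ?_)
    simpa [γ] using hs1 k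

/-- The metric space `(Conf^lf_∞(ℂ), d_sum)` is path-connected. -/
theorem confSp_pathConnected (T : TestFamily) : PathConnectedSpace (ConfSp T) := by
  haveI : Nonempty (ConfSp T) := ⟨Ntilde T⟩
  exact ⟨‹_›, confSp_joined T⟩
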